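/- Let f : ℕ^{K_BC} → ℝ be strictly increasing in each coordinate. If a complete schedule L minimizes f((T_κ(L))_{κ∈K_BC}) among all complete schedules, then every configuration κ ∈ K_BC has discovery time T_κ(L) ≤ lcm(B)·|C| − 1, i.e., the worst-case discovery time of L is at most lcm(B)·|C| time slots. -/

import Mathlib

open scoped Classical

/-- A listening schedule over channel set `C`: a set of (channel, time-slot) pairs
such that all scanned channels belong to `C` and at most one channel is scanned
per time slot. -/
def IsSchedule (C : Finset ℕ) (L : Set (ℕ × ℕ)) : Prop :=
  (∀ p ∈ L, p.1 ∈ C) ∧ ∀ c c' t : ℕ, (c, t) ∈ L → (c', t) ∈ L → c = c'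

/-- Configuration `(c, b, δ)` is discovered at time slot `t` by the schedule `L`. -/
def DiscoveredAt (L : Set (ℕ × ℕ)) (c b δ t : ℕ) : Prop :=
  (c, t) ∈ L ∧ t % b = δ

/-- The discovery time `T_κ(L)` of configuration `κ = (c, b, δ)`: the least time slot
at which it is discovered (junk value `0` if it is never discovered). -/
noncomputable def discTime (L : Set (ℕ × ℕ)) (c b δ : ℕ) : ℕ :=
  sInf {t | DiscoveredAt L c b δ t}

/-- A schedule is complete if every configuration in `K_BC` is discovered at some slot. -/
def Complete (C B : Finset ℕ) (L : Set (ℕ × ℕ)) : Prop :=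
  ∀ c ∈ C, ∀ b ∈ B, ∀ δ < b, ∃ t, DiscoveredAt L c b δ t

/-- The set of all configurations `K_BC`, as a finite set of triples `(c, b, δ)`. -/
def KBC (C B : Finset ℕ) : Finset (ℕ × ℕ × ℕ) :=
  (C ×ˢ B ×ˢ Finset.range (B.sup id)).filter fun κ => κ.2.2 < κ.2.1

/-- The weight `P_κ = 1/(b·|B|·|C|)` of a configuration with beacon period `b`. -/
noncomputable def weight (C B : Finset ℕ) (b : ℕ) : ℝ :=
  (1 : ℝ) / ((b : ℝ) * (B.card : ℝ) * (C.card : ℝ))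

/-- Total weight of configurations discovered by `L` at some slot `≤ t` (the NDoT curve). -/
noncomputable def discSum (C B : Finset ℕ) (L : Set (ℕ × ℕ)) (t : ℕ) : ℝ :=
  ∑ κ ∈ (KBC C B).filter (fun κ => ∃ t' ≤ t, DiscoveredAt L κ.1 κ.2.1 κ.2.2 t'),
    weight C B κ.2.1

/-- The mean discovery time `MDT(L) = Σ_{κ ∈ K_BC} P_κ · T_κ(L)`. -/
noncomputable def MDT (C B : Finset ℕ) (L : Set (ℕ × ℕ)) : ℝ :=
  ∑ κ ∈ KBC C B, weight C B κ.2.1 * (discTime L κ.1 κ.2.1 κ.2.2 : ℝ)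

/-- A schedule is recursive if it is complete and, for every `b ∈ B`, every
configuration with beacon period `b` has discovery time at most `b·|C| - 1`. -/
def Recursive (C B : Finset ℕ) (L : Set (ℕ × ℕ)) : Prop :=
  Complete C B L ∧
  ∀ c ∈ C, ∀ b ∈ B, ∀ δ < b, discTime L c b δ ≤ b * C.card - 1

/-- `D(c,t)`: the expected number of new discoveries when scanning channel `c` at slot `t`,
i.e. the sum of weights of configurations `(c, b, t mod b)`, `b ∈ B`, not yet
discovered by `L` before slot `t`. -/
noncomputable def gain (C B : Finset ℕ) (L : Set (ℕ × ℕ)) (c t : ℕ) : ℝ :=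
  ∑ b ∈ B.filter (fun b => ¬ ∃ t' < t, DiscoveredAt L c b (t % b) t'),
    weight C B b

/-- A schedule is greedy if, whenever some channel has positive expected gain at slot `t`,
it scans a channel maximizing the expected gain at slot `t`. -/
def Greedy (C B : Finset ℕ) (L : Set (ℕ × ℕ)) : Prop :=
  IsSchedule C L ∧
  ∀ t : ℕ, (∃ c ∈ C, 0 < gain C B L c t) →
    ∃ c ∈ C, (c, t) ∈ L ∧ ∀ c' ∈ C, gain C B L c' t ≤ gain C B L c t

/-!
Suppose that `T = T_κ(L) ≥ lcm(B) * |C|` for a configuration `κ` on channel `c`. There are at least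
`|C|` slots before `T` in the residue class of `T` modulo `lcm(B)`, and none of them scans `c`.
Hence they scan at most `|C| - 1` channels, so one of them is idle or scans a channel already
scanned earlier in the same class. Since every beacon period divides `lcm(B)`, such a slot
discovers nothing new, and reassigning it to `c` discovers `κ` before `T` while no other discovery
is delayed. So the vector of discovery times of `L` is not Pareto minimal, whereas that of a
minimizer of a strictly increasing cost is.
-/

theorem strictMono_of_forall_strictMono_update {ι α : Type*} {π : ι → Type*} [Finite ι]
    [DecidableEq ι] [∀ i, PartialOrder (π i)] [∀ i, LocallyFiniteOrder (π i)] [Preorder α]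
    {f : (∀ i, π i) → α} (hf : ∀ v i, StrictMono fun x => f (Function.update v i x)) :
    StrictMono f := by
  cases nonempty_fintype ι
  refine (strictMono_iff_forall_covBy f).2 fun v w hvw => ?_
  obtain ⟨i, x, hx, rfl⟩ := Pi.covBy_iff_exists_right_eq.1 hvw
  simpa using hf v i hx.lt

theorem le_card_filter_range_modEq {M n T : ℕ} (hM : 0 < M) (hT : M * n ≤ T) (r : ℕ) :
    n ≤ ((Finset.range T).filter (· ≡ r [MOD M])).card := by
  rw [← Nat.count_eq_card_filter_range, Nat.count_modEq_card T hM]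
  exact le_add_right ((Nat.le_div_iff_mul_le hM).2 (by rwa [mul_comm]))

section Schedule

variable {C B : Finset ℕ} {L : Set (ℕ × ℕ)} {M T c b δ s t : ℕ}

theorem mem_KBC : (c, b, δ) ∈ KBC C B ↔ c ∈ C ∧ b ∈ B ∧ δ < b := by
  simp only [KBC, Finset.mem_filter, Finset.mem_product, Finset.mem_range]
  have hle (hb : b ∈ B) : b ≤ B.sup id := Finset.le_sup (f := id) hb
  exact ⟨fun ⟨⟨hc, hb, _⟩, hδ⟩ => ⟨hc, hb, hδ⟩,
    fun ⟨hc, hb, hδ⟩ => ⟨⟨hc, hb, hδ.trans_le (hle hb)⟩, hδ⟩⟩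

theorem discTime_le (h : DiscoveredAt L c b δ t) : discTime L c b δ ≤ t :=
  Nat.sInf_le h

theorem discoveredAt_discTime (h : ∃ t, DiscoveredAt L c b δ t) :
    DiscoveredAt L c b δ (discTime L c b δ) :=
  Nat.sInf_mem h

theorem not_discoveredAt_of_lt_discTime (h : t < discTime L c b δ) : ¬ DiscoveredAt L c b δ t :=
  Nat.notMem_of_lt_sInf h

/-- The vector `(T_κ(L))_κ` of discovery times, indexed by the configurations in `K_BC` and ordered
coordinatewise. -/
noncomputable def discTimes (C B : Finset ℕ) (L : Set (ℕ × ℕ)) :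
    {κ : ℕ × ℕ × ℕ // κ ∈ KBC C B} → ℕ :=
  fun κ => discTime L κ.1.1 κ.1.2.1 κ.1.2.2

/-- Slot `s` is redundant modulo `M` if whatever `L` scans at `s` it has already scanned at an
earlier slot congruent to `s` modulo `M`; an idle slot is redundant. When `M` is a common multiple
of the beacon periods, such a slot makes no new discovery. -/
def IsRedundantSlot (L : Set (ℕ × ℕ)) (M s : ℕ) : Prop :=
  ∀ c, (c, s) ∈ L → ∃ s' < s, s' ≡ s [MOD M] ∧ (c, s') ∈ L

/-- The schedule `L` with slot `s` reassigned to channel `c`. -/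
def reassign (L : Set (ℕ × ℕ)) (s c : ℕ) : Set (ℕ × ℕ) :=
  insert (c, s) {p ∈ L | p.2 ≠ s}

theorem card_le_card_of_forall_not_isRedundantSlot {S D : Finset ℕ}
    (hS : ∀ s ∈ S, s ≡ T [MOD M]) (hD : ∀ s ∈ S, ∀ c, (c, s) ∈ L → c ∈ D)
    (hred : ∀ s ∈ S, ¬ IsRedundantSlot L M s) : S.card ≤ D.card := by
  have exists_new (s) (hs : s ∈ S) : ∃ c, (c, s) ∈ L ∧ ∀ s' ∈ S, s' < s → (c, s') ∉ L := by
    have hnew := hred s hs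
    simp only [IsRedundantSlot] at hnew
    push Not at hnew
    obtain ⟨c, hcs, hfirst⟩ := hnew
    exact ⟨c, hcs, fun s' hs' hlt => hfirst s' hlt ((hS s' hs').trans (hS s hs).symm)⟩
  choose! g hscan hfirst using exists_new
  refine Finset.card_le_card_of_injOn g (fun s hs => hD s hs _ (hscan s hs)) ?_
  intro s hs s' hs' heq
  by_contra hne
  rcases lt_or_gt_of_ne hne with hlt | hlt
  · exact hfirst s' hs' s hs hlt (heq ▸ hscan s hs)
  · exact hfirst s hs s' hs' hlt (heq ▸ hscan s' hs')

theorem exists_isRedundantSlot (hL : ∀ p ∈ L, p.1 ∈ C) (hc : c ∈ C) (hM : 0 < M)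
    (hT : M * C.card ≤ T) (hno : ∀ s < T, s ≡ T [MOD M] → (c, s) ∉ L) :
    ∃ s < T, s ≡ T [MOD M] ∧ IsRedundantSlot L M s := by
  by_contra! hred
  let S := (Finset.range T).filter (· ≡ T [MOD M])
  have mem_S {s : ℕ} : s ∈ S ↔ s < T ∧ s ≡ T [MOD M] := by simp [S]
  have scan_mem_erase (s) (hs : s ∈ S) (c') (hscan : (c', s) ∈ L) : c' ∈ C.erase c := by
    obtain ⟨hlt, hmod⟩ := mem_S.1 hs
    refine Finset.mem_erase.2 ⟨?_, hL _ hscan⟩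
    rintro rfl
    exact hno s hlt hmod hscan
  have : C.card < C.card := calc
    C.card ≤ S.card := le_card_filter_range_modEq hM hT T
    _ ≤ (C.erase c).card := card_le_card_of_forall_not_isRedundantSlot
        (fun s hs => (mem_S.1 hs).2) scan_mem_erase
        fun s hs => hred s (mem_S.1 hs).1 (mem_S.1 hs).2
    _ < C.card := Finset.card_erase_lt_of_mem hc
  exact this.false

theorem isSchedule_reassign (hL : IsSchedule C L) (hc : c ∈ C) (s : ℕ) :
    IsSchedule C (reassign L s c) := by
  constructor
  · rintro p (rfl | ⟨hp, -⟩)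
    · exact hc
    · exact hL.1 p hp
  · intro c₁ c₂ t h₁ h₂
    simp only [reassign, Set.mem_insert_iff, Set.mem_ofPred_eq, Prod.mk.injEq] at h₁ h₂
    grind [hL.2 c₁ c₂ t]

theorem discoveredAt_reassign_self (hs : s % b = δ) : DiscoveredAt (reassign L s c) c b δ s :=
  ⟨Set.mem_insert _ _, hs⟩

theorem exists_le_discoveredAt_reassign (hs : IsRedundantSlot L M s) (hbM : b ∣ M) (c' : ℕ)
    (h : DiscoveredAt L c b δ t) : ∃ t' ≤ t, DiscoveredAt (reassign L s c') c b δ t' := by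
  obtain ⟨hscan, hδ⟩ := h
  by_cases hts : t = s
  · subst hts
    obtain ⟨s', hlt, hmod, hscan'⟩ := hs c hscan
    exact ⟨s', hlt.le, Or.inr ⟨hscan', hlt.ne⟩, Eq.trans (hmod.of_dvd hbM) hδ⟩
  · exact ⟨t, le_rfl, Or.inr ⟨hscan, hts⟩, hδ⟩

theorem complete_reassign (hcomp : Complete C B L) (hs : IsRedundantSlot L M s)
    (hBM : ∀ b ∈ B, b ∣ M) (c : ℕ) : Complete C B (reassign L s c) := by
  intro c' hc' b hb δ hδ
  obtain ⟨t, ht⟩ := hcomp c' hc' b hb δ hδ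
  obtain ⟨t', -, ht'⟩ := exists_le_discoveredAt_reassign hs (hBM b hb) c ht
  exact ⟨t', ht'⟩

theorem discTimes_reassign_le (hcomp : Complete C B L) (hs : IsRedundantSlot L M s)
    (hBM : ∀ b ∈ B, b ∣ M) (c : ℕ) : discTimes C B (reassign L s c) ≤ discTimes C B L := by
  rintro ⟨⟨c', b, δ⟩, hκ⟩
  obtain ⟨hc', hb, hδ⟩ := mem_KBC.1 hκ
  obtain ⟨t, hle, ht⟩ := exists_le_discoveredAt_reassign hs (hBM b hb) c
    (discoveredAt_discTime (hcomp c' hc' b hb δ hδ))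
  exact (discTime_le ht).trans hle

theorem exists_discTimes_lt (hL : IsSchedule C L) (hcomp : Complete C B L) (hM : 0 < M)
    (hBM : ∀ b ∈ B, b ∣ M) (hc : c ∈ C) (hb : b ∈ B) (hδ : δ < b)
    (hlate : M * C.card ≤ discTime L c b δ) :
    ∃ L', (IsSchedule C L' ∧ Complete C B L') ∧ discTimes C B L' < discTimes C B L := by
  have hdisc := discoveredAt_discTime (hcomp c hc b hb δ hδ)
  have mod_eq {s : ℕ} (hs : s ≡ discTime L c b δ [MOD M]) : s % b = δ :=
    Eq.trans (hs.of_dvd (hBM b hb)) hdisc.2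
  obtain ⟨s, hlt, hmod, hred⟩ := exists_isRedundantSlot hL.1 hc hM hlate
    fun s hlt hmod hscan => not_discoveredAt_of_lt_discTime hlt ⟨hscan, mod_eq hmod⟩
  have hearlier : discTime (reassign L s c) c b δ < discTime L c b δ :=
    (discTime_le (discoveredAt_reassign_self (mod_eq hmod))).trans_lt hlt
  exact ⟨reassign L s c, ⟨isSchedule_reassign hL hc s, complete_reassign hcomp hred hBM c⟩,
    Pi.lt_def.2 ⟨discTimes_reassign_le hcomp hred hBM c,
      ⟨(c, b, δ), mem_KBC.2 ⟨hc, hb, hδ⟩⟩, hearlier⟩⟩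

end Schedule

theorem stmt13_general (C B : Finset ℕ) (hBpos : ∀ b ∈ B, 0 < b) (L : Set (ℕ × ℕ))
    (hmin : MinimalFor (fun L => IsSchedule C L ∧ Complete C B L) (discTimes C B) L) :
    ∀ c ∈ C, ∀ b ∈ B, ∀ δ < b, discTime L c b δ ≤ B.lcm id * C.card - 1 := by
  intro c hc b hb δ hδ
  by_contra! hlate
  have hlcm : 0 < B.lcm id :=
    Nat.pos_of_ne_zero fun h0 =>
      let ⟨b, hb, hb0⟩ := Finset.lcm_eq_zero_iff.1 h0
      (hBpos b hb).ne' hb0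
  obtain ⟨L', hL', hlt⟩ := exists_discTimes_lt hmin.prop.1 hmin.prop.2 hlcm
    (fun _ hb => Finset.dvd_lcm (f := id) hb) hc hb hδ (Nat.le_of_pred_lt hlate)
  exact hmin.not_lt hL' hlt

/-- if `f : ℕ^{K_BC} → ℝ` is strictly increasing in each coordinate and
a complete schedule `L` minimizes `f((T_κ(L))_κ)` among complete schedules, then every
configuration has discovery time at most `lcm(B)·|C| − 1`. -/
theorem stmt13 (C B : Finset ℕ) (hC : C.Nonempty) (hB : B.Nonempty)
    (hBpos : ∀ b ∈ B, 0 < b)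
    (f : ({κ : ℕ × ℕ × ℕ // κ ∈ KBC C B} → ℕ) → ℝ)
    (hf : ∀ (v : {κ : ℕ × ℕ × ℕ // κ ∈ KBC C B} → ℕ)
        (κ : {κ : ℕ × ℕ × ℕ // κ ∈ KBC C B}) (n m : ℕ), n < m →
      f (Function.update v κ n) < f (Function.update v κ m))
    (L : Set (ℕ × ℕ)) (hL : IsSchedule C L) (hcomp : Complete C B L)
    (hmin : ∀ L' : Set (ℕ × ℕ), IsSchedule C L' → Complete C B L' →
      f (fun κ => discTime L κ.1.1 κ.1.2.1 κ.1.2.2) ≤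
        f (fun κ => discTime L' κ.1.1 κ.1.2.1 κ.1.2.2)) :
    ∀ c ∈ C, ∀ b ∈ B, ∀ δ < b, discTime L c b δ ≤ B.lcm id * C.card - 1 := by
  have hf_mono := strictMono_of_forall_strictMono_update fun v κ n m hnm => hf v κ n m hnm
  exact stmt13_general C B hBpos L <| .of_strictMonoOn_comp (hf_mono.strictMonoOn _)
    ⟨⟨hL, hcomp⟩, fun L' hL' _ => hmin L' hL'.1 hL'.2⟩
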